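/- arXiv:1309.0422 — 3 statements merged into one kernel-verified Lean document; each statement's English description precedes it below -/
import Mathlib

section
/- Let n be a positive even integer and let L_n = {S_0, …, S_{n²}} with S_i = (0202)^i 1 (0202)^{n²−i} over Σ₃ = {0,1,2}. Let w be a word over Σ₂ = {0,1} such that S = φ(w) is a common supersequence of L_n, and suppose w contains exactly k occurrences of 1 (necessarily k ≥ 1). Then w contains at least ⌈(n²+1)/k⌉ − 1 + n² occurrences of 0; equivalently, S contains at least ⌈(n²+1)/k⌉ − 1 + n² blocks 0202. -/
/-- The morphism φ : Σ₂* → Σ₃* with φ(0) = 0202 and φ(1) = 1. -/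
def phi : List (Fin 2) → List (Fin 3)
  | [] => []
  | a :: w => (if a = 0 then [0, 2, 0, 2] else [1]) ++ phi w

/-- `(0202)^k` over Σ₃. -/
def pow0202 (k : ℕ) : List (Fin 3) := (List.replicate k [(0 : Fin 3), 2, 0, 2]).flatten

/-- `S_i = (0202)^i 1 (0202)^{n²-i}`. -/
def Sword (n i : ℕ) : List (Fin 3) := pow0202 i ++ [1] ++ pow0202 (n ^ 2 - i)

/-!
An embedding of `S_i` into `φ(w)` splits `w` at some occurrence of `1`, with at least `i` zeros
before it and at least `n² - i` zeros after it. If `w` has `n² + d` zeros, an occurrence preceded by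
`c` zeros can serve only the indices with `c - d ≤ i ≤ c`. The `n² + 1` indices are therefore
covered by `k` intervals of at most `d + 1` elements each, so that `n² + 1 ≤ k (d + 1)`.
-/

open scoped List

section Words

variable {α β : Type*}

theorem append_cons_sublist_iff {l₁ l₂ w : List α} {b : α} :
    l₁ ++ b :: l₂ <+ w ↔ ∃ u v, w = u ++ b :: v ∧ l₁ <+ u ∧ l₂ <+ v := by
  constructor
  · rw [List.append_sublist_iff]
    rintro ⟨r₁, r₂, rfl, h₁, h₂⟩
    obtain ⟨t₁, t₂, rfl, hb, ht₂⟩ := List.cons_sublist_iff.mp h₂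
    obtain ⟨x, y, rfl⟩ := List.append_of_mem hb
    exact ⟨r₁ ++ x, y ++ t₂, by simp, List.sublist_append_of_sublist_left h₁,
      List.sublist_append_of_sublist_right ht₂⟩
  · rintro ⟨u, v, rfl, h₁, h₂⟩
    exact h₁.append (h₂.cons_cons b)

theorem exists_eq_append_cons_of_flatMap_eq {f : α → List β} {a : α} {b : β}
    (hfa : f a = [b]) (hf : ∀ x, b ∈ f x → x = a) {w : List α} {r s : List β}
    (h : w.flatMap f = r ++ b :: s) :
    ∃ u v, w = u ++ a :: v ∧ u.flatMap f = r ∧ v.flatMap f = s := by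
  induction w generalizing r with
  | nil => simp at h
  | cons x w ih =>
    rw [List.flatMap_cons, List.append_eq_append_iff] at h
    have prepend {r' : List β} (hr : r = f x ++ r') (h' : w.flatMap f = r' ++ b :: s) :
        ∃ u v, x :: w = u ++ a :: v ∧ u.flatMap f = r ∧ v.flatMap f = s := by
      obtain ⟨u, v, rfl, rfl, rfl⟩ := ih h'
      exact ⟨x :: u, v, rfl, by rw [hr, List.flatMap_cons], rfl⟩
    obtain ⟨r', hr, h'⟩ | ⟨_ | ⟨c, t⟩, hx, h'⟩ := h
    · exact prepend hr h'
    · exact prepend (r' := []) (by simp [hx]) h'.symm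
    · obtain ⟨rfl, rfl⟩ := List.cons_eq_cons.mp h'
      obtain rfl := hf x (by simp [hx])
      obtain ⟨rfl, rfl⟩ : r = [] ∧ t = [] := by
        simpa [hfa, List.singleton_eq_append_iff] using hx
      exact ⟨[], w, rfl, rfl, rfl⟩

variable [DecidableEq α]

theorem length_mem_idxsOf_append_cons (u v : List α) (b : α) :
    u.length ∈ (u ++ b :: v).idxsOf b := by
  rw [List.mem_idxsOf_iff_getElem_pos (by simp)]
  simp

theorem add_one_le_count_mul_of_replicate_append_cons_sublist {w : List α} {a b : α} {m d : ℕ}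
    (hd : w.count a = m + d)
    (hw : ∀ i ≤ m, List.replicate i a ++ b :: List.replicate (m - i) a <+ w) :
    m + 1 ≤ w.count b * (d + 1) := by
  let window (p : ℕ) : Finset ℕ := Finset.Icc ((w.take p).count a - d) ((w.take p).count a)
  have range_subset : Finset.range (m + 1) ⊆ (w.idxsOf b).toFinset.biUnion window := by
    intro i hi
    have hi : i ≤ m := Finset.mem_range_succ_iff.mp hi
    obtain ⟨u, v, rfl, hu, hv⟩ := append_cons_sublist_iff.mp (hw i hi)
    rw [List.replicate_sublist_iff] at hu hv
    have huv : u.count a + v.count a ≤ m + d := by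
      rw [← hd, List.count_append]
      gcongr
      exact (List.sublist_cons_self b v).count_le a
    refine Finset.mem_biUnion.mpr
      ⟨u.length, List.mem_toFinset.mpr (length_mem_idxsOf_append_cons u v b), ?_⟩
    simp only [window, List.take_left', Finset.mem_Icc]
    omega
  calc m + 1 = (Finset.range (m + 1)).card := (Finset.card_range _).symm
    _ ≤ ((w.idxsOf b).toFinset.biUnion window).card := Finset.card_le_card range_subset
    _ ≤ (w.idxsOf b).toFinset.card * (d + 1) :=
      Finset.card_biUnion_le_card_mul _ _ _ fun p _ ↦ by
        simp only [window, Nat.card_Icc]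
        omega
    _ ≤ w.count b * (d + 1) := by
      gcongr
      exact (List.toFinset_card_le _).trans_eq List.length_idxsOf

end Words

theorem phi_eq_flatMap (w : List (Fin 2)) :
    phi w = w.flatMap fun a ↦ if a = 0 then [0, 2, 0, 2] else [1] := by
  induction w with
  | nil => rfl
  | cons a w ih => rw [phi, ih, List.flatMap_cons]

theorem exists_eq_append_one_cons_of_phi_eq {w : List (Fin 2)} {r s : List (Fin 3)}
    (h : phi w = r ++ 1 :: s) : ∃ u v, w = u ++ 1 :: v ∧ phi u = r ∧ phi v = s := by
  simp only [phi_eq_flatMap] at h ⊢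
  exact exists_eq_append_cons_of_flatMap_eq (a := 1) rfl (by decide) h

theorem count_two_phi (w : List (Fin 2)) : (phi w).count 2 = 2 * w.count 0 := by
  induction w with
  | nil => rfl
  | cons a w ih =>
    fin_cases a <;> simp [phi, ih]
    ring

theorem count_two_pow0202 (i : ℕ) : (pow0202 i).count 2 = 2 * i := by
  simp [pow0202, List.count_flatten, mul_comm]

theorem replicate_zero_sublist_of_pow0202_sublist_phi {w : List (Fin 2)} {i : ℕ}
    (h : pow0202 i <+ phi w) : List.replicate i 0 <+ w := by
  have hcount := h.count_le 2
  rw [count_two_pow0202, count_two_phi] at hcount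
  exact List.replicate_sublist_iff.mpr (by omega)

theorem replicate_zero_append_one_cons_sublist {w : List (Fin 2)} {i j : ℕ}
    (h : pow0202 i ++ [1] ++ pow0202 j <+ phi w) :
    List.replicate i 0 ++ 1 :: List.replicate j 0 <+ w := by
  rw [List.append_assoc, List.singleton_append, append_cons_sublist_iff] at h
  obtain ⟨r, s, hrs, hi, hj⟩ := h
  obtain ⟨u, v, rfl, rfl, rfl⟩ := exists_eq_append_one_cons_of_phi_eq hrs
  exact append_cons_sublist_iff.mpr ⟨u, v, rfl,
    replicate_zero_sublist_of_pow0202_sublist_phi hi,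
    replicate_zero_sublist_of_pow0202_sublist_phi hj⟩

theorem stmt_6_general (m : ℕ) (w : List (Fin 2))
    (hsup : ∀ i ≤ m, pow0202 i ++ [1] ++ pow0202 (m - i) <+ phi w) :
    ⌈((m : ℚ) + 1) / (w.count 1 : ℚ)⌉ - 1 + (m : ℤ) ≤ (w.count 0 : ℤ) := by
  have hw : ∀ i ≤ m, List.replicate i 0 ++ 1 :: List.replicate (m - i) 0 <+ w :=
    fun i hi ↦ replicate_zero_append_one_cons_sublist (hsup i hi)
  have hm : m ≤ w.count 0 := List.replicate_sublist_iff.mp <|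
    (List.sublist_append_left _ _).trans (hw m le_rfl)
  obtain ⟨d, hd⟩ := Nat.exists_eq_add_of_le hm
  have hcover : m + 1 ≤ w.count 1 * (d + 1) :=
    add_one_le_count_mul_of_replicate_append_cons_sublist hd hw
  have hone : 0 < w.count 1 := pos_of_mul_pos_left (by omega) (Nat.zero_le (d + 1))
  have hceil : ⌈((m : ℚ) + 1) / (w.count 1 : ℚ)⌉ ≤ (d : ℤ) + 1 := by
    rw [Int.ceil_le, div_le_iff₀' (by exact_mod_cast hone)]
    exact_mod_cast hcover
  omega

theorem stmt_6 (n : ℕ) (hn : 0 < n) (hne : Even n) (w : List (Fin 2)) (k : ℕ)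
    (hsup : ∀ i ≤ n ^ 2, (Sword n i).Sublist (phi w))
    (hk : w.count 1 = k) (hk1 : 1 ≤ k) :
    ⌈((n : ℚ) ^ 2 + 1) / (k : ℚ)⌉ - 1 + (n : ℤ) ^ 2 ≤ (w.count 0 : ℤ) := by
  subst hk
  exact_mod_cast stmt_6_general (n ^ 2) w hsup
end

section
/- Let G, n, m, L and k be as in the context. If L has a common supersequence over Σ₃ of length at most 168n² + 37n − 3 + k, then G has a vertex cover of size at most k. -/
/-- `A_i = (0202)^{6n(i-1)+3n} 1 (0202)^{6n(n+1-i)}`. -/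
def Aword (n i : ℕ) : List (Fin 3) :=
  pow0202 (6 * n * (i - 1) + 3 * n) ++ [1] ++ pow0202 (6 * n * (n + 1 - i))

/-- `B_j = (0202)^j 1 (0202)^{36n²-j}`. -/
def Bword (n j : ℕ) : List (Fin 3) := pow0202 j ++ [1] ++ pow0202 (36 * n ^ 2 - j)

/-- `X_i^j = A_i B_j`. -/
def Xword (n i j : ℕ) : List (Fin 3) := Aword n i ++ Bword n j

/-- `T_l` for the edge `e_l = v_i v_j`, `i < j`. -/
def Tword (n i j : ℕ) : List (Fin 3) :=
  pow0202 (6 * n * (i - 1)) ++ [1] ++ pow0202 (6 * n * (j - i - 1) + 3 * n) ++ [1]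
    ++ pow0202 (6 * n * (n + 2 - j)) ++ pow0202 (36 * n ^ 2 - 1)

/-!
Attach to every occurrence `p` of `1` in a common supersequence the number `c p` of blocks `0202`
that fit before it. The words `X_i^j` force, for each vertex `i`, a `1` with
`c p = 6n(i-1) + 3n + s` for some loss `s`, and for each `j` a late `1`, one with `6n² + 3n ≤ c q`.
If `v` blocks fit beyond the unavoidable `42n² + 3n`, a late `1` serves at most `v - s + 1` of the
`36n² + 1` indices `j`, so by AM-GM the late `1`s and the extra blocks together cost at least
`24n - 3 + 4s` letters. The length bound then leaves at most `n + k` letters `1` that are not late,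
and forces `s < 3n`: each of the `n` intervals `[6n(i-1), 6ni)` has a `1` in its upper half. Hence
at most `k` of them also have a `1` in their lower half. These form a vertex cover, since `T_l`,
for the edge `v_i v_j`, is so long that one of its two `1`s lies in the lower half of the `i`-th or
of the `j`-th interval.
-/

open Finset

section Words

variable {α : Type*}

/-- The `k`-th power `w^k` of the word `w`. -/
def wordPow (w : List α) (k : ℕ) : List α := (List.replicate k w).flatten

lemma wordPow_add (w : List α) (a b : ℕ) : wordPow w (a + b) = wordPow w a ++ wordPow w b := by
  rw [wordPow, List.replicate_add, List.flatten_append, wordPow, wordPow]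

lemma length_wordPow (w : List α) (k : ℕ) : (wordPow w k).length = w.length * k := by
  simp [wordPow, mul_comm]

lemma notMem_wordPow {w : List α} {x : α} (hx : x ∉ w) (k : ℕ) : x ∉ wordPow w k := by
  simp [wordPow, hx]

variable [DecidableEq α] {w l r u v S : List α} {x : α} {k : ℕ}

/-- The largest `k` such that `w^k` is a subsequence of `l`. The bound `l.length` on the search
is harmless for nonempty `w` only. -/
def maxPow (w l : List α) : ℕ :=
  Nat.findGreatest (fun k => (wordPow w k).Sublist l) l.length

lemma wordPow_maxPow_sublist (w l : List α) : (wordPow w (maxPow w l)).Sublist l :=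
  Nat.findGreatest_spec (P := fun k => (wordPow w k).Sublist l) (Nat.zero_le _) (by simp [wordPow])

lemma le_maxPow (hw : w ≠ []) (h : (wordPow w k).Sublist l) : k ≤ maxPow w l := by
  refine Nat.le_findGreatest ?_ h
  calc k ≤ w.length * k := Nat.le_mul_of_pos_left k (List.length_pos_iff.2 hw)
    _ = (wordPow w k).length := (length_wordPow w k).symm
    _ ≤ l.length := h.length_le

lemma maxPow_add_le_maxPow_append (hw : w ≠ []) (h : (wordPow w k).Sublist r) :
    maxPow w l + k ≤ maxPow w (l ++ r) := by
  apply le_maxPow hw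
  rw [wordPow_add]
  exact (wordPow_maxPow_sublist w l).append h

lemma maxPow_take_add_le (hw : w ≠ []) {p : ℕ} (h : (wordPow w k).Sublist (l.drop (p + 1))) :
    maxPow w (l.take p) + k ≤ maxPow w l := by
  have h' : (wordPow w k).Sublist (l.drop p) :=
    h.trans (List.drop_sublist_drop_left l p.le_succ)
  simpa only [List.take_append_drop] using maxPow_add_le_maxPow_append hw (l := l.take p) h'

lemma length_add_count_le_of_sublist (hx : x ∉ u) (h : u.Sublist S) :
    u.length + S.count x ≤ S.length := by
  have hu : u.countP (fun y => !(y == x)) = u.length := by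
    rw [List.countP_eq_length]
    intro y hy
    simpa using ne_of_mem_of_not_mem hy hx
  have hS := List.length_eq_countP_add_countP (· == x) (l := S)
  have hle := h.countP_le (p := fun y => !(y == x))
  simp only [Bool.not_eq_true, Bool.decide_eq_false] at hS
  rw [List.count_eq_countP]
  omega

lemma length_mul_maxPow_add_count_le (hx : x ∉ w) (S : List α) :
    w.length * maxPow w S + S.count x ≤ S.length := by
  rw [← length_wordPow]
  exact length_add_count_le_of_sublist (notMem_wordPow hx _) (wordPow_maxPow_sublist w S)

lemma exists_mem_idxsOf_of_append_cons_sublist (h : (u ++ x :: v).Sublist S) :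
    ∃ p ∈ S.idxsOf x, u.Sublist (S.take p) ∧ v.Sublist (S.drop (p + 1)) := by
  obtain ⟨S₁, S₂, rfl, hu, hxv⟩ := List.append_sublist_iff.1 h
  obtain ⟨U, R, rfl, hx, hv⟩ := List.cons_sublist_iff.1 hxv
  obtain ⟨U₁, U₂, rfl⟩ := List.append_of_mem hx
  have hsplit : S₁ ++ (U₁ ++ x :: U₂ ++ R) = (S₁ ++ U₁) ++ x :: (U₂ ++ R) := by simp
  rw [hsplit]
  refine ⟨(S₁ ++ U₁).length, ?_, ?_, ?_⟩
  · simp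
  · rw [List.take_left]
    exact hu.trans (List.sublist_append_left _ _)
  · rw [← List.drop_drop, List.drop_left, List.drop_one, List.tail_cons]
    exact hv.trans (List.sublist_append_right _ _)

end Words

section Pairs

variable {ι : Type*} {O : Finset ι} {c : ι → ℕ} {K a b d : ℕ}

/-- Two elements of `O` can play the letters `x` of a word `w^a x w^b x w^d`: here `O` stands for
the occurrences of `x` in a supersequence, `c p` for the largest power of `w` fitting before `p`,
and `K` for the largest power of `w` fitting into the whole supersequence. -/
def AdmitsPair (O : Finset ι) (c : ι → ℕ) (K a b d : ℕ) : Prop :=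
  ∃ p ∈ O, ∃ q ∈ O, a ≤ c p ∧ c p + b ≤ c q ∧ c q + d ≤ K

lemma admitsPair_of_sublist {α : Type*} [DecidableEq α] {w S : List α} {x : α} (hw : w ≠ [])
    (h : ((wordPow w a ++ x :: wordPow w b) ++ x :: wordPow w d).Sublist S) :
    AdmitsPair (S.idxsOf x).toFinset (fun p => maxPow w (S.take p)) (maxPow w S) a b d := by
  obtain ⟨q, hq, hab, hd⟩ := exists_mem_idxsOf_of_append_cons_sublist h
  obtain ⟨p, hp, ha, hb⟩ := exists_mem_idxsOf_of_append_cons_sublist hab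
  have htake : (S.take q).take p = S.take p := by
    rw [List.take_take, min_eq_left]
    have hpq := List.lt_add_of_mem_idxsOf p hp
    rw [List.length_take] at hpq
    omega
  have hpS : p ∈ S.idxsOf x := by grind
  rw [htake] at ha
  have hbq := maxPow_take_add_le hw hb
  rw [htake] at hbq
  exact ⟨p, List.mem_toFinset.2 hpS, q, List.mem_toFinset.2 hq, le_maxPow hw ha, hbq,
    maxPow_take_add_le hw hd⟩

lemma succ_le_card_mul_of_forall_exists {B : Finset ι} {N l u : ℕ}
    (h : ∀ j ≤ N, ∃ q ∈ B, l + j ≤ c q ∧ c q ≤ u + j) : N + 1 ≤ #B * (u + 1 - l) := by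
  have hlu : l ≤ u := by
    obtain ⟨q, -, hl, hu⟩ := h 0 N.zero_le
    omega
  calc N + 1 = #(range (N + 1)) := (card_range _).symm
    _ ≤ #(B.biUnion fun q => Icc (c q - u) (c q - l)) := by
      refine card_le_card fun j hj => ?_
      obtain ⟨q, hq, hl, hu⟩ := h j (mem_range_succ_iff.1 hj)
      exact mem_biUnion.2 ⟨q, hq, mem_Icc.2 (by omega)⟩
    _ ≤ #B * (u + 1 - l) := by
      refine card_biUnion_le_card_mul _ _ _ fun q _ => ?_
      rw [Nat.card_Icc]
      omega

/-- The witness is an element of `O` minimizing `c` among those with `a ≤ c p`: with it, each `q`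
is at most `K - (c p + b + N)` blocks later than the earliest position possible. -/
lemma exists_lt_card_mul_of_forall_admitsPair {N : ℕ}
    (h : ∀ j ≤ N, AdmitsPair O c K a (b + j) (N - j)) :
    ∃ p ∈ O, a ≤ c p ∧ c p + b + N ≤ K ∧
      N < #{q ∈ O | a + b ≤ c q} * (K + 1 - (c p + b + N)) := by
  have hne : {p ∈ O | a ≤ c p}.Nonempty := by
    obtain ⟨p, hp, -, -, hap, -⟩ := h 0 N.zero_le
    exact ⟨p, mem_filter.2 ⟨hp, hap⟩⟩
  obtain ⟨p, hp, hmin⟩ := exists_min_image _ c hne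
  obtain ⟨hpO, hap⟩ := mem_filter.1 hp
  have hlate : ∀ j ≤ N, ∃ q ∈ {q ∈ O | a + b ≤ c q},
      c p + b + j ≤ c q ∧ c q ≤ K - N + j ∧ N ≤ K := by
    intro j hj
    obtain ⟨p', hp', q, hq, hap', hpq, hqK⟩ := h j hj
    have := hmin p' (mem_filter.2 ⟨hp', hap'⟩)
    exact ⟨q, mem_filter.2 ⟨hq, by omega⟩, by omega⟩
  have hK : c p + b + N ≤ K := by
    obtain ⟨q, -, hq⟩ := hlate 0 N.zero_le
    omega
  refine ⟨p, hpO, hap, hK, ?_⟩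
  have hmul := succ_le_card_mul_of_forall_exists fun j hj =>
    (hlate j hj).imp fun q hq => ⟨hq.1, hq.2.1, hq.2.2.1⟩
  rwa [show K - N + 1 - (c p + b) = K + 1 - (c p + b + N) by omega] at hmul

lemma two_mul_lt_add_of_sq_lt_mul {m x y : ℕ} (h : m ^ 2 < x * y) : 2 * m < x + y := by
  refine lt_of_pow_lt_pow_left₀ 2 (Nat.zero_le _) ?_
  calc (2 * m) ^ 2 = 4 * m ^ 2 := by ring
    _ < 4 * x * y := by linarith
    _ ≤ (x + y) ^ 2 := four_mul_le_sq_add x y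

end Pairs

section Halves

/-- Values `2 * i - 2` and `2 * i - 1` of `g` stand for the lower and the upper half of an `i`-th
interval. -/
lemma card_add_card_add_card_le_of_forall_exists {ι : Type*} {O : Finset ι} {g : ι → ℕ} {n : ℕ}
    (hupper : ∀ i ∈ Icc 1 n, ∃ p ∈ O, g p + 1 = 2 * i) :
    #{i ∈ Icc 1 n | ∃ p ∈ O, g p + 2 = 2 * i} + n + #{p ∈ O | 2 * n < g p} ≤ #O := by
  have htotal := card_filter_add_card_filter_not (s := O) fun p => g p < 2 * n
  have hparity := card_filter_add_card_filter_not (s := {p ∈ O | g p < 2 * n}) fun p => Even (g p)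
  simp only [filter_filter, not_lt] at htotal hparity
  have hlowerCard : #{i ∈ Icc 1 n | ∃ p ∈ O, g p + 2 = 2 * i} ≤
      #{p ∈ O | g p < 2 * n ∧ Even (g p)} := by
    refine card_le_card_of_surjOn (fun p => g p / 2 + 1) fun i hi => ?_
    obtain ⟨hin, p, hp, hpi⟩ := mem_filter.1 hi
    exact ⟨p, mem_filter.2 ⟨hp, by grind⟩, by grind⟩
  have hupperCard : n ≤ #{p ∈ O | g p < 2 * n ∧ ¬Even (g p)} := by
    calc n = #(Icc 1 n) := by simp
      _ ≤ _ := by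
        refine card_le_card_of_surjOn (fun p => g p / 2 + 1) fun i hi => ?_
        obtain ⟨p, hp, hpi⟩ := hupper i hi
        have hin := mem_Icc.1 hi
        exact ⟨p, mem_filter.2 ⟨hp, by grind⟩, by grind⟩
  have hlateCard : #{p ∈ O | 2 * n < g p} ≤ #{p ∈ O | 2 * n ≤ g p} :=
    card_le_card (monotone_filter_right O fun _ _ => le_of_lt)
  omega

/-- Unless the first element of the pair lies in the lower half of the `i`-th interval, the second
one is pushed beyond the start of the `j`-th interval. -/
lemma AdmitsPair.exists_lower_half {ι : Type*} {O : Finset ι} {c : ι → ℕ} {K d h i j : ℕ}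
    (hi : 1 ≤ i) (hij : i < j)
    (hpair : AdmitsPair O c K (2 * h * (i - 1)) (2 * h * (j - i - 1) + h) d)
    (hK : K < 2 * h * (j - 1) + h + d) :
    (∃ p ∈ O, c p / h + 2 = 2 * i) ∨ ∃ p ∈ O, c p / h + 2 = 2 * j := by
  obtain ⟨p, hp, q, hq, hip, hpq, hqK⟩ := hpair
  obtain ⟨t, rfl⟩ := Nat.exists_eq_add_of_le' hi
  obtain ⟨r, rfl⟩ := Nat.exists_eq_add_of_lt hij
  rw [show t + 1 + r + 1 - (t + 1) - 1 = r by omega] at hpq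
  simp only [Nat.add_sub_cancel] at hip hK
  rcases lt_or_ge (c p) (2 * h * t + h) with hlow | hup
  · have hhalf : c p / h = 2 * t := Nat.div_eq_of_lt_le (by linarith) (by linarith)
    exact .inl ⟨p, hp, by omega⟩
  · have hhalf : c q / h = 2 * (t + 1 + r) := Nat.div_eq_of_lt_le (by linarith) (by linarith)
    exact .inr ⟨q, hq, by omega⟩

end Halves

section VertexWords

variable {ι : Type*} {O : Finset ι} {c : ι → ℕ} {K n k i : ℕ}

/-- The pairs that the words `X_i^j`, `j ≤ 36n²`, of the `i`-th vertex require. -/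
def AdmitsVertexWords (O : Finset ι) (c : ι → ℕ) (K n i : ℕ) : Prop :=
  ∀ j ≤ 36 * n ^ 2,
    AdmitsPair O c K (6 * n * (i - 1) + 3 * n) (6 * n * (n + 1 - i) + j) (36 * n ^ 2 - j)

lemma vertex_blocks_add_eq (hi : i ∈ Icc 1 n) :
    6 * n * (i - 1) + 6 * n * (n + 1 - i) = 6 * n ^ 2 := by
  obtain ⟨h1, hn⟩ := mem_Icc.1 hi
  rw [← mul_add, show i - 1 + (n + 1 - i) = n by omega]
  ring

lemma AdmitsVertexWords.exists_lt_card_mul (hi : i ∈ Icc 1 n) (h : AdmitsVertexWords O c K n i) :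
    ∃ p ∈ O, ∃ s, c p = 6 * n * (i - 1) + 3 * n + s ∧ 42 * n ^ 2 + 3 * n + s ≤ K ∧
      (6 * n) ^ 2 < #{q ∈ O | 6 * n ^ 2 + 3 * n ≤ c q} * (K + 1 - (42 * n ^ 2 + 3 * n + s)) := by
  obtain ⟨p, hp, hip, hK, hlt⟩ := exists_lt_card_mul_of_forall_admitsPair h
  obtain ⟨s, hs⟩ := Nat.exists_eq_add_of_le hip
  have hadd := vertex_blocks_add_eq hi
  have hend : c p + 6 * n * (n + 1 - i) + 36 * n ^ 2 = 42 * n ^ 2 + 3 * n + s := by omega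
  have hstart : 6 * n * (i - 1) + 3 * n + 6 * n * (n + 1 - i) = 6 * n ^ 2 + 3 * n := by omega
  rw [hend] at hK
  rw [hend, hstart] at hlt
  exact ⟨p, hp, s, hs, hK, by linarith⟩

lemma AdmitsVertexWords.exists_add_card_le
    (hlen : 4 * K + #O ≤ 168 * n ^ 2 + 37 * n - 3 + k) (hi : i ∈ Icc 1 n)
    (h : AdmitsVertexWords O c K n i) :
    ∃ p ∈ O, ∃ s, c p = 6 * n * (i - 1) + 3 * n + s ∧
      4 * s + #O ≤ n + k + #{q ∈ O | 6 * n ^ 2 + 3 * n ≤ c q} := by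
  obtain ⟨p, hp, s, hs, hK, hlt⟩ := h.exists_lt_card_mul hi
  have hamgm : 2 * (12 * n) < #{q ∈ O | 6 * n ^ 2 + 3 * n ≤ c q} +
      4 * (K + 1 - (42 * n ^ 2 + 3 * n + s)) :=
    two_mul_lt_add_of_sq_lt_mul (by linarith)
  have hn : 1 ≤ n := (mem_Icc.1 hi).1.trans (mem_Icc.1 hi).2
  refine ⟨p, hp, s, hs, ?_⟩
  omega

lemma AdmitsVertexWords.exists_upper_half (hk : k < n)
    (hlen : 4 * K + #O ≤ 168 * n ^ 2 + 37 * n - 3 + k) (hi : i ∈ Icc 1 n)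
    (h : AdmitsVertexWords O c K n i) : ∃ p ∈ O, c p / (3 * n) + 1 = 2 * i := by
  obtain ⟨p, hp, s, hs, hcard⟩ := h.exists_add_card_le hlen hi
  have hlate := card_filter_le O fun q => 6 * n ^ 2 + 3 * n ≤ c q
  have hsn : s < 3 * n := by omega
  obtain ⟨t, rfl⟩ := Nat.exists_eq_add_of_le' (mem_Icc.1 hi).1
  rw [Nat.add_sub_cancel] at hs
  have hhalf : c p / (3 * n) = 2 * t + 1 := Nat.div_eq_of_lt_le (by linarith) (by linarith [hsn])
  exact ⟨p, hp, by omega⟩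

lemma AdmitsVertexWords.succ_blocks_lt (hk : k < n)
    (hlen : 4 * K + #O ≤ 168 * n ^ 2 + 37 * n - 3 + k) (hi : i ∈ Icc 1 n)
    (h : AdmitsVertexWords O c K n i) : K + 1 < 42 * n ^ 2 + 9 * n := by
  obtain ⟨-, -, s, -, hK, hlt⟩ := h.exists_lt_card_mul hi
  have hlate := card_filter_le O fun q => 6 * n ^ 2 + 3 * n ≤ c q
  by_contra! hge
  have hfew : #{q ∈ O | 6 * n ^ 2 + 3 * n ≤ c q} ≤ 2 * n := by omega
  have hspare : K + 1 - (42 * n ^ 2 + 3 * n + s) ≤ 7 * n := by omega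
  nlinarith [Nat.mul_le_mul hfew hspare]

lemma card_lower_half_le (hk : k < n)
    (hlen : 4 * K + #O ≤ 168 * n ^ 2 + 37 * n - 3 + k)
    (h : ∀ i ∈ Icc 1 n, AdmitsVertexWords O c K n i) :
    #{i ∈ Icc 1 n | ∃ p ∈ O, c p / (3 * n) + 2 = 2 * i} ≤ k := by
  have h1 : 1 ∈ Icc 1 n := mem_Icc.2 (by omega)
  obtain ⟨-, -, s, -, hcard⟩ := (h 1 h1).exists_add_card_le hlen h1
  have hhalves := card_add_card_add_card_le_of_forall_exists fun i hi =>
    (h i hi).exists_upper_half hk hlen hi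
  have hlate : {p ∈ O | 2 * n < c p / (3 * n)} = {p ∈ O | 6 * n ^ 2 + 3 * n ≤ c p} := by
    refine filter_congr fun p _ => ?_
    rw [← Nat.succ_le_iff, Nat.le_div_iff_mul_le (by omega),
      show (2 * n).succ * (3 * n) = 6 * n ^ 2 + 3 * n by rw [Nat.succ_eq_add_one]; ring]
  rw [hlate] at hhalves
  omega

lemma AdmitsPair.exists_lower_half_of_edge {j : ℕ} (hi : 1 ≤ i) (hij : i < j) (hj : j ≤ n)
    (hK : K + 1 < 42 * n ^ 2 + 9 * n)
    (h : AdmitsPair O c K (6 * n * (i - 1)) (6 * n * (j - i - 1) + 3 * n)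
      (6 * n * (n + 2 - j) + (36 * n ^ 2 - 1))) :
    (∃ p ∈ O, c p / (3 * n) + 2 = 2 * i) ∨ ∃ p ∈ O, c p / (3 * n) + 2 = 2 * j := by
  have hadd : 6 * n * (j - 1) + 6 * n * (n + 2 - j) = 6 * n ^ 2 + 6 * n := by
    rw [← mul_add, show j - 1 + (n + 2 - j) = n + 1 by omega]
    ring
  have h6 : 6 * n = 2 * (3 * n) := by ring
  refine AdmitsPair.exists_lower_half hi hij (h6 ▸ h) ?_
  rw [← h6]
  omega

end VertexWords

section Blocks

variable {S : List (Fin 3)} {n i j : ℕ}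

/-- The largest `k` such that `(0202)^k` is a subsequence of `S`. -/
def blockCount (S : List (Fin 3)) : ℕ := maxPow [0, 2, 0, 2] S

/-- The positions of the letter `1` in `S`. -/
def onePositions (S : List (Fin 3)) : Finset ℕ := (S.idxsOf 1).toFinset

lemma four_mul_blockCount_add_card_le (S : List (Fin 3)) :
    4 * blockCount S + #(onePositions S) ≤ S.length := by
  rw [onePositions, List.toFinset_card_of_nodup List.nodup_idxsOf, List.length_idxsOf]
  exact length_mul_maxPow_add_count_le (w := [0, 2, 0, 2]) (by decide) S

lemma pow0202_eq_wordPow : pow0202 = wordPow [0, 2, 0, 2] := rfl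

lemma admitsVertexWords_of_Xword_sublist (h : ∀ j ≤ 36 * n ^ 2, (Xword n i j).Sublist S) :
    AdmitsVertexWords (onePositions S) (fun p => blockCount (S.take p)) (blockCount S) n i := by
  refine fun j hj => admitsPair_of_sublist (x := 1) (List.cons_ne_nil _ _) ?_
  simpa [Xword, Aword, Bword, pow0202_eq_wordPow, wordPow_add] using h j hj

lemma admitsPair_of_Tword_sublist (h : (Tword n i j).Sublist S) :
    AdmitsPair (onePositions S) (fun p => blockCount (S.take p)) (blockCount S)
      (6 * n * (i - 1)) (6 * n * (j - i - 1) + 3 * n)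
      (6 * n * (n + 2 - j) + (36 * n ^ 2 - 1)) := by
  refine admitsPair_of_sublist (x := 1) (List.cons_ne_nil _ _) ?_
  simpa [Tword, pow0202_eq_wordPow, wordPow_add] using h

end Blocks

theorem stmt_14 (n k : ℕ) (hn : 1 ≤ n) (E : Finset (ℕ × ℕ))
    (hE : ∀ e ∈ E, 1 ≤ e.1 ∧ e.1 < e.2 ∧ e.2 ≤ n)
    (hsup : ∃ S : List (Fin 3), S.length ≤ 168 * n ^ 2 + 37 * n - 3 + k ∧
      (∀ i j, 1 ≤ i → i ≤ n → j ≤ 36 * n ^ 2 → (Xword n i j).Sublist S) ∧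
      (∀ e ∈ E, (Tword n e.1 e.2).Sublist S)) :
    ∃ V' : Finset ℕ, V' ⊆ Finset.Icc 1 n ∧ V'.card ≤ k ∧
      ∀ e ∈ E, e.1 ∈ V' ∨ e.2 ∈ V' := by
  rcases le_or_gt n k with hnk | hkn
  · refine ⟨Icc 1 n, subset_rfl, by simpa using hnk, fun e he => .inl ?_⟩
    obtain ⟨h1, h12, h2⟩ := hE e he
    exact mem_Icc.2 ⟨h1, by omega⟩
  obtain ⟨S, hS, hX, hT⟩ := hsup
  have hlen := (four_mul_blockCount_add_card_le S).trans hS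
  have hvertex := fun i (hi : i ∈ Icc 1 n) => admitsVertexWords_of_Xword_sublist fun j =>
    hX i j (mem_Icc.1 hi).1 (mem_Icc.1 hi).2
  have h1 : 1 ∈ Icc 1 n := mem_Icc.2 ⟨le_rfl, hn⟩
  have hK := (hvertex 1 h1).succ_blocks_lt hkn hlen h1
  refine ⟨_, filter_subset _ _, card_lower_half_le hkn hlen hvertex, fun e he => ?_⟩
  obtain ⟨hi, hij, hj⟩ := hE e he
  have hcover := (admitsPair_of_Tword_sublist (hT e he)).exists_lower_half_of_edge hi hij hj hK
  exact hcover.imp (fun h => mem_filter.2 ⟨mem_Icc.2 (by omega), h⟩)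
    fun h => mem_filter.2 ⟨mem_Icc.2 (by omega), h⟩
end

section
/- Let G, n, m, L and k be as in the context, with 0 ≤ k ≤ n. Let w be a word over Σ₂ = {0,1} such that S = φ(w) is a common supersequence of L and |S| ≤ 168n² + 37n − 3 + k, and write w = w' w'' where w' is the shortest prefix of w containing exactly 6n² + 3n occurrences of 0. Then for each i ∈ [1:n], w' contains an occurrence of the letter 1 that is preceded (within w') by at least 6n(i−1) + 3n and strictly fewer than 6in occurrences of 0. Consequently, w' contains at least n occurrences of the letter 1. -/
/-!
The morphism `φ` reflects the subsequence order, so everything happens over `{0, 1}`, where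
`X_i^j` is `0^k 1 0^(l+j) 1 0^(36n²-j)` with `k = 6n(i-1) + 3n` and `l = 6n(n+1-i)`. If no `1` of
`w` had at least `k` but fewer than `6in` zeros before it, then the first `1` of every `X_i^j` would
be matched after at least `6in` zeros, so `w` would contain `0^(6n²+6n+j) 1 0^(36n²-j)` for all `j`.
If `w` has `d` zeros more than these words, each of them places a `1` of `w` in a window of `d + 1`
zero counts starting at `6n² + 6n + j`, so `36n² < (d + 1) · #ones`. By AM-GM,
`4(d + 1) + #ones > 24n`, which makes `φ(w)` too long.
-/

section Words

open scoped List
open List (replicate)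

variable {α : Type*} [DecidableEq α] {a b : α} {v w w' : List α}

theorem exists_eq_append_cons_of_replicate_append_cons_sublist {k : ℕ}
    (h : replicate k a ++ b :: v <+ w) : ∃ p q, w = p ++ b :: q ∧ k ≤ p.count a ∧ v <+ q := by
  obtain ⟨w₁, w₂, rfl, hk, hbv⟩ := List.append_sublist_iff.mp h
  obtain ⟨s, q, rfl, hb, hv⟩ := List.cons_sublist_iff.mp hbv
  obtain ⟨p, t, rfl⟩ := List.append_of_mem hb
  refine ⟨w₁ ++ p, t ++ q, by simp, ?_, hv.trans (List.sublist_append_right t q)⟩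
  rw [List.count_append]
  exact (List.replicate_sublist_iff.mp hk).trans (Nat.le_add_right _ _)

/-- The positions of the letter `b` in `w`, each measured by the number of occurrences of `a` that
precede it; two occurrences of `b` with no `a` between them are identified. -/
def countsBefore (a b : α) (w : List α) : Set ℕ :=
  {c | ∃ p q, w = p ++ b :: q ∧ p.count a = c}

theorem countsBefore_cons_subset (x : α) (w : List α) :
    countsBefore a b (x :: w) ⊆
      (if x = b then {0} else ∅) ∪ (fun c => [x].count a + c) '' countsBefore a b w := by
  rintro _ ⟨_ | ⟨y, p⟩, q, hw, rfl⟩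
  · obtain ⟨rfl, -⟩ := List.cons.inj hw
    simp
  · obtain ⟨rfl, rfl⟩ := List.cons.inj hw
    exact .inr ⟨p.count a, ⟨p, q, rfl, rfl⟩, List.count_append.symm⟩

theorem encard_countsBefore_le (a b : α) (w : List α) :
    (countsBefore a b w).encard ≤ w.count b := by
  induction w with
  | nil => simp [countsBefore]
  | cons x w ih =>
    calc (countsBefore a b (x :: w)).encard
        ≤ (if x = b then {0} else ∅ : Set ℕ).encard + (countsBefore a b w).encard :=
          (Set.encard_le_encard (countsBefore_cons_subset x w)).trans <|
            (Set.encard_union_le _ _).trans (add_le_add_right (Set.encard_image_le _ _) _)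
      _ ≤ (if x = b then 1 else 0) + w.count b := by gcongr; split_ifs <;> simp
      _ = (x :: w).count b := by rw [List.count_cons, add_comm]; simp

theorem le_count_of_forall_exists_mem_countsBefore {lo : ℕ → ℕ} (hlo : Monotone lo) {N : ℕ}
    (h : ∀ t < N, ∃ c ∈ countsBefore a b w, lo t ≤ c ∧ c < lo (t + 1)) : N ≤ w.count b := by
  choose! f hf hle hlt using h
  have hmono : StrictMonoOn f (Set.Iio N) := fun s hs t ht hst =>
    (hlt s hs).trans_le ((hlo hst).trans (hle t ht))
  have hcard : (N : ℕ∞) ≤ w.count b :=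
    calc (N : ℕ∞)
      _ = (Set.Iio N).encard := by
        rw [← Finset.coe_Iio, Set.encard_coe_eq_coe_finsetCard, Nat.card_Iio]
      _ = (f '' Set.Iio N).encard := hmono.injOn.encard_image.symm
      _ ≤ (countsBefore a b w).encard := Set.encard_le_encard (Set.image_subset_iff.mpr hf)
      _ ≤ w.count b := encard_countsBefore_le a b w
  exact_mod_cast hcard

theorem mem_countsBefore_of_isPrefix {c : ℕ} (hw : w' <+: w) (hc : c ∈ countsBefore a b w)
    (hlt : c < w'.count a) : c ∈ countsBefore a b w' := by
  obtain ⟨p, q, rfl, rfl⟩ := hc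
  obtain ⟨t, ht⟩ := hw
  rcases List.append_eq_append_iff.mp ht with ⟨r, rfl, -⟩ | ⟨r, rfl, hr⟩
  · simp at hlt
  · obtain _ | ⟨x, r⟩ := r
    · simp at hlt
    · obtain ⟨rfl, -⟩ := List.cons.inj hr
      exact ⟨p, r, rfl, rfl⟩

theorem replicate_append_sublist_of_countsBefore_gap {k k' l : ℕ}
    (h : replicate k a ++ b :: (replicate l a ++ v) <+ w)
    (hgap : ∀ c ∈ countsBefore a b w, k ≤ c → k' ≤ c) : replicate (k' + l) a ++ v <+ w := by
  obtain ⟨p, q, rfl, hk, hq⟩ := exists_eq_append_cons_of_replicate_append_cons_sublist h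
  have hp : replicate k' a <+ p := List.replicate_sublist_iff.mpr (hgap _ ⟨p, q, rfl, rfl⟩ hk)
  rw [← List.replicate_append_replicate, List.append_assoc]
  exact hp.append (hq.trans (List.sublist_cons_self b q))

theorem lt_count_mul_of_forall_replicate_sublist {k d M : ℕ}
    (h : ∀ j ≤ M, replicate (k + j) a ++ b :: replicate (M - j) a <+ w)
    (hd : w.count a ≤ k + M + d) : M < w.count b * (d + 1) := by
  have hwindow : ∀ j ≤ M, ∃ c ∈ countsBefore a b w, k + j ≤ c ∧ c < k + j + (d + 1) := by
    intro j hj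
    obtain ⟨p, q, rfl, hp, hq⟩ := exists_eq_append_cons_of_replicate_append_cons_sublist (h j hj)
    refine ⟨p.count a, ⟨p, q, rfl, rfl⟩, hp, ?_⟩
    rw [List.replicate_sublist_iff] at hq
    rw [List.count_append, List.count_cons] at hd
    omega
  have hmono : Monotone fun t => k + t * (d + 1) := fun s t hst => by dsimp only; gcongr
  refine (Nat.div_lt_iff_lt_mul d.succ_pos).mp
    (le_count_of_forall_exists_mem_countsBefore (a := a) hmono fun t ht => ?_)
  simpa only [Nat.succ_mul, add_assoc] using
    hwindow (t * (d + 1)) ((Nat.le_div_iff_mul_le d.succ_pos).mp (Nat.lt_succ_iff.mp ht))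

end Words

section Morphism

open scoped List
open List (replicate)

theorem phi_append (u v : List (Fin 2)) : phi (u ++ v) = phi u ++ phi v := by
  induction u with
  | nil => rfl
  | cons a u ih => rw [List.cons_append, phi, phi, ih, List.append_assoc]

theorem pow0202_eq_phi_replicate (k : ℕ) : pow0202 k = phi (replicate k 0) := by
  induction k with
  | zero => rfl
  | succ k ih => rw [List.replicate_succ, phi, ← ih]; rfl

theorem length_phi (w : List (Fin 2)) : (phi w).length = 4 * w.count 0 + w.count 1 := by
  induction w with
  | nil => rfl
  | cons a w ih => fin_cases a <;> simp [phi, ih] <;> omega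

theorem sublist_of_phi_sublist_phi {u w : List (Fin 2)} (h : phi u <+ phi w) : u <+ w := by
  induction w generalizing u with
  | nil =>
    cases u with
    | nil => exact List.nil_sublist _
    | cons x u => fin_cases x <;> simp [phi] at h
  | cons y w ih =>
    cases u with
    | nil => exact List.nil_sublist _
    | cons x u =>
      by_cases hxy : x = y
      · subst hxy
        exact (ih ((List.append_sublist_append_left _).mp h)).cons_cons x
      · have hskip : phi (x :: u) <+ phi w := by
          fin_cases x <;> fin_cases y <;> simp_all [phi, List.sublist_cons_iff]
        exact (ih hskip).cons y

theorem Xword_eq_phi (n i j : ℕ) :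
    Xword n i j = phi (replicate (6 * n * (i - 1) + 3 * n) 0 ++
      1 :: (replicate (6 * n * (n + 1 - i) + j) 0 ++ 1 :: replicate (36 * n ^ 2 - j) 0)) := by
  have hphi_one (u : List (Fin 2)) : phi (1 :: u) = [1] ++ phi u := rfl
  simp only [Xword, Aword, Bword, pow0202_eq_phi_replicate, phi_append, hphi_one,
    ← List.replicate_append_replicate, List.append_assoc]

theorem lt_length_phi_of_forall_replicate_sublist {w : List (Fin 2)} {k m : ℕ}
    (h : ∀ j ≤ m ^ 2, replicate (k + j) 0 ++ 1 :: replicate (m ^ 2 - j) 0 <+ w) :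
    4 * (k + m ^ 2 + m) < (phi w).length + 4 := by
  have hzeros : k + m ^ 2 ≤ w.count 0 := by
    simpa using (h 0 (Nat.zero_le _)).count_le 0
  obtain ⟨d, hd⟩ := Nat.exists_eq_add_of_le hzeros
  have hprod : m ^ 2 < w.count 1 * (d + 1) := lt_count_mul_of_forall_replicate_sublist h hd.le
  have hsum : 4 * m < w.count 1 + 4 * (d + 1) := by
    refine lt_of_pow_lt_pow_left₀ 2 (Nat.zero_le _) ?_
    calc (4 * m) ^ 2 = 16 * m ^ 2 := by ring
      _ < 16 * (w.count 1 * (d + 1)) := by gcongr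
      _ = 4 * w.count 1 * (4 * (d + 1)) := by ring
      _ ≤ (w.count 1 + 4 * (d + 1)) ^ 2 := four_mul_le_sq_add _ _
  rw [length_phi, hd]
  omega

theorem exists_mem_countsBefore_of_length_phi_le {w : List (Fin 2)} {k k' l m : ℕ}
    (h : ∀ j ≤ m ^ 2,
      replicate k 0 ++ 1 :: (replicate (l + j) 0 ++ 1 :: replicate (m ^ 2 - j) 0) <+ w)
    (hlen : (phi w).length + 4 ≤ 4 * (k' + l + m ^ 2 + m)) :
    ∃ c ∈ countsBefore 0 1 w, k ≤ c ∧ c < k' := by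
  by_contra! hgap
  refine (lt_length_phi_of_forall_replicate_sublist fun j hj => ?_).not_ge hlen
  rw [add_assoc]
  exact replicate_append_sublist_of_countsBefore_gap (h j hj) hgap

theorem exists_mem_countsBefore_of_Xword_sublist {n i : ℕ} (hin : i ≤ n)
    {w : List (Fin 2)} (hX : ∀ j ≤ 36 * n ^ 2, Xword n i j <+ phi w)
    (hlen : (phi w).length + 3 < 168 * n ^ 2 + 48 * n) :
    ∃ c ∈ countsBefore 0 1 w, 6 * n * (i - 1) + 3 * n ≤ c ∧ c < 6 * i * n := by
  have hsq : (6 * n) ^ 2 = 36 * n ^ 2 := by ring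
  have hsum : 6 * i * n + 6 * n * (n + 1 - i) = 6 * n ^ 2 + 6 * n := by
    obtain ⟨t, rfl⟩ := Nat.exists_eq_add_of_le hin
    rw [show i + t + 1 - i = t + 1 by omega]
    ring
  refine exists_mem_countsBefore_of_length_phi_le (l := 6 * n * (n + 1 - i)) (m := 6 * n) ?_ ?_
  · intro j hj
    rw [hsq] at hj ⊢
    exact sublist_of_phi_sublist_phi (Xword_eq_phi n i j ▸ hX j hj)
  · rw [hsum, hsq]
    omega

end Morphism

theorem stmt_15_general (n : ℕ) {w w' : List (Fin 2)} (hw : w' <+: w)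
    (hcount : 6 * n ^ 2 ≤ w'.count 0)
    (hsupX : ∀ i j, 1 ≤ i → i ≤ n → j ≤ 36 * n ^ 2 → (Xword n i j).Sublist (phi w))
    (hlen : (phi w).length + 3 < 168 * n ^ 2 + 48 * n) :
    (∀ i, 1 ≤ i → i ≤ n → ∃ p q : List (Fin 2), w' = p ++ [1] ++ q ∧
        6 * n * (i - 1) + 3 * n ≤ p.count 0 ∧ p.count 0 < 6 * i * n) ∧
      n ≤ w'.count 1 := by
  have hzone : ∀ i, 1 ≤ i → i ≤ n →
      ∃ c ∈ countsBefore 0 1 w', 6 * n * (i - 1) + 3 * n ≤ c ∧ c < 6 * i * n := by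
    intro i hi hin
    obtain ⟨c, hc, hlo, hhi⟩ :=
      exists_mem_countsBefore_of_Xword_sublist hin (fun j => hsupX i j hi hin) hlen
    have hle : 6 * i * n ≤ 6 * n ^ 2 := by rw [sq, ← mul_assoc]; gcongr
    exact ⟨c, mem_countsBefore_of_isPrefix hw hc (by omega), hlo, hhi⟩
  constructor
  · intro i hi hin
    obtain ⟨_, ⟨p, q, hpq, rfl⟩, hlo, hhi⟩ := hzone i hi hin
    exact ⟨p, q, by simpa using hpq, hlo, hhi⟩
  · have hmono : Monotone fun t => 6 * t * n := fun s t hst => by dsimp only; gcongr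
    refine le_count_of_forall_exists_mem_countsBefore (a := 0) hmono fun t ht => ?_
    obtain ⟨c, hc, hlo, hhi⟩ := hzone (t + 1) (Nat.le_add_left 1 t) ht
    rw [Nat.add_sub_cancel, mul_right_comm] at hlo
    exact ⟨c, hc, by omega, hhi⟩

theorem stmt_15 (n k : ℕ) (hn : 1 ≤ n) (hk : k ≤ n) (E : Finset (ℕ × ℕ))
    (hE : ∀ e ∈ E, 1 ≤ e.1 ∧ e.1 < e.2 ∧ e.2 ≤ n)
    (w w' w'' : List (Fin 2)) (hw : w = w' ++ w'')
    (hcount : w'.count 0 = 6 * n ^ 2 + 3 * n)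
    (hshort : ∀ p : List (Fin 2), p <+: w → p.count 0 = 6 * n ^ 2 + 3 * n →
      w'.length ≤ p.length)
    (hsupX : ∀ i j, 1 ≤ i → i ≤ n → j ≤ 36 * n ^ 2 → (Xword n i j).Sublist (phi w))
    (hsupT : ∀ e ∈ E, (Tword n e.1 e.2).Sublist (phi w))
    (hlen : (phi w).length ≤ 168 * n ^ 2 + 37 * n - 3 + k) :
    (∀ i, 1 ≤ i → i ≤ n → ∃ p q : List (Fin 2), w' = p ++ [1] ++ q ∧
        6 * n * (i - 1) + 3 * n ≤ p.count 0 ∧ p.count 0 < 6 * i * n) ∧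
      n ≤ w'.count 1 := by
  exact stmt_15_general n ⟨w'', hw.symm⟩ (by omega) hsupX (by omega)
end
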